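/- Let l ≥ 1 and k ≥ 0 be integers, ρ₀ ≥ 0, and z ∈ ℂ with Re z ≥ 0. There exists a constant c > 0 such that for all R ≥ ρ₀² + 1 and all a ≥ 1/2, ( ∫_{‖H‖ > a} ( Σ_{|α| ≤ 2k} |∂^α (ℱ^{−1} s_R^z)(H)| )² dH )^{1/2} ≤ c R^{−(Re z − (2k + l/2) + 1/2)/2} a^{−Re z − 1/2}. -/

import Mathlib

open Real MeasureTheory

/-- s_R^z(λ) = (1 − (ρ₀² + ‖λ‖²)/R)_+^z on ℝ^l. -/
noncomputable def sRz (l : ℕ) (ρ₀ R : ℝ) (z : ℂ) (lam : EuclideanSpace ℝ (Fin l)) : ℂ :=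
  if 0 < 1 - (ρ₀ ^ 2 + ‖lam‖ ^ 2) / R then
    ((1 - (ρ₀ ^ 2 + ‖lam‖ ^ 2) / R : ℝ) : ℂ) ^ z
  else 0

/-- The inverse Fourier transform (ℱ^{−1}g)(H) = (2π)^{−l} ∫_{ℝ^l} g(λ) e^{i⟨λ,H⟩} dλ. -/
noncomputable def invFT (l : ℕ) (g : EuclideanSpace ℝ (Fin l) → ℂ)
    (H : EuclideanSpace ℝ (Fin l)) : ℂ :=
  (((2 * Real.pi) ^ l : ℝ) : ℂ)⁻¹ *
    ∫ lam : EuclideanSpace ℝ (Fin l),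
      g lam * Complex.exp (Complex.I * ((inner ℝ lam H : ℝ) : ℂ))

/-- Iterated partial derivative of a function on ℝ^l along a list of coordinate directions. -/
noncomputable def mderiv {l : ℕ} : List (Fin l) → (EuclideanSpace ℝ (Fin l) → ℂ) →
    EuclideanSpace ℝ (Fin l) → ℂ
  | [], f => f
  | i :: L, f => fun x => fderiv ℝ (mderiv L f) x (EuclideanSpace.single i 1)

/-- The partial derivative ∂^α of a function on ℝ^l associated with the multi-index
α : Fin l → ℕ (α i derivatives in the i-th coordinate direction). -/
noncomputable def partialD {l : ℕ} (α : Fin l → ℕ) (f : EuclideanSpace ℝ (Fin l) → ℂ) :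
    EuclideanSpace ℝ (Fin l) → ℂ :=
  mderiv ((List.finRange l).flatMap fun i => List.replicate (α i) i) f


open scoped FourierTransform ENNReal SchwartzMap

lemma aux_plancherel {V : Type*} [NormedAddCommGroup V] [InnerProductSpace ℝ V]
    [FiniteDimensional ℝ V] [MeasurableSpace V] [BorelSpace V] (g : V → ℂ)
    (h1 : Integrable g) (h2 : MemLp g 2) :
    ∫⁻ x, ‖𝓕 g x‖ₑ ^ 2 = ∫⁻ x, ‖g x‖ₑ ^ 2 := by
  have hF : Continuous (𝓕 g) :=
    VectorFourier.fourierIntegral_continuous Real.continuous_fourierChar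
      (by exact continuous_inner) h1
  have key : ∀ᵐ x, 𝓕 g x = (𝓕 (h2.toLp g) : Lp ℂ 2 (volume : Measure V)) x := by
    apply ae_eq_of_integral_contDiff_smul_eq
    · exact hF.locallyIntegrable
    · exact (Lp.memLp _).locallyIntegrable (by norm_num)
    · intro φ hφ hφc
      have hg₁ : HasCompactSupport (Complex.ofRealCLM ∘ φ) := hφc.comp_left rfl
      have hg₂ : ContDiff ℝ ((⊤ : ℕ∞) : WithTop ℕ∞) (Complex.ofRealCLM ∘ φ) := by fun_prop
      set ψ : 𝓢(V, ℂ) := hg₁.toSchwartzMap hg₂ with hψ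
      have e1 := DFunLike.congr_fun (Lp.fourier_toTemperedDistribution_eq (h2.toLp g)) ψ
      rw [TemperedDistribution.fourier_apply, Lp.toTemperedDistribution_apply,
        Lp.toTemperedDistribution_apply] at e1
      have e2 : ∫ x, φ x • (𝓕 (h2.toLp g) : Lp ℂ 2 (volume : Measure V)) x
          = ∫ x, ψ x • (𝓕 (h2.toLp g) : Lp ℂ 2 (volume : Measure V)) x := by
        simp [hψ]
      rw [e2, ← e1]
      have e3 : ∫ x, (𝓕 ψ) x • (h2.toLp g) x = ∫ x, (𝓕 ψ) x • g x := by
        apply integral_congr_ae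
        filter_upwards [h2.coeFn_toLp] with x hx
        rw [hx]
      rw [e3]
      have e4 := VectorFourier.integral_fourierIntegral_smul_eq_flip (L := innerₗ V) (e := 𝐞)
        (μ := volume) (ν := volume) (f := ψ) (g := g) Real.continuous_fourierChar
        (by exact continuous_inner) ψ.integrable h1
      rw [flip_innerₗ] at e4
      refine Eq.trans ?_ (Eq.trans e4.symm ?_)
      · apply integral_congr_ae
        filter_upwards with x
        have : ψ x • VectorFourier.fourierIntegral 𝐞 volume (innerₗ V) g x = φ x • 𝓕 g x := by
          simp [hψ]
          left
          rfl
        exact this.symm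
      · rw [SchwartzMap.fourier_coe]
        rfl
  have h3 : eLpNorm (𝓕 g) 2 volume = eLpNorm g 2 volume := by
    rw [eLpNorm_congr_ae key, ← eLpNorm_congr_ae (h2.coeFn_toLp)]
    have := Lp.norm_fourier_eq (h2.toLp g)
    rw [Lp.norm_def, Lp.norm_def] at this
    exact (ENNReal.toReal_eq_toReal_iff' (Lp.memLp _).2.ne (Lp.memLp _).2.ne).1 this
  have h4 := congrArg (fun t => t ^ (2:ℝ)) h3
  have h5 : ∀ f : V → ℂ, eLpNorm f 2 volume ^ (2:ℝ) = ∫⁻ x, ‖f x‖ₑ ^ 2 := by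
    intro f
    rw [eLpNorm_eq_lintegral_rpow_enorm_toReal (by norm_num) (by norm_num), ← ENNReal.rpow_mul]
    norm_num
  rwa [h5, h5] at h4

lemma aux_lintegral_smul (l : ℕ) (f : EuclideanSpace ℝ (Fin l) → ℝ≥0∞) (r : ℝ) (hr : 0 < r) :
    ∫⁻ x, f (r⁻¹ • x) = ENNReal.ofReal (r ^ l) * ∫⁻ x, f x := by
  have hr' : r⁻¹ ≠ 0 := inv_ne_zero hr.ne'
  have e := (MeasurableEquiv.smul₀ r⁻¹ hr' : EuclideanSpace ℝ (Fin l) ≃ᵐ _).measurableEmbedding.lintegral_map (μ := volume) f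
  have e2 := Measure.map_addHaar_smul (volume : Measure (EuclideanSpace ℝ (Fin l))) hr'
  simp only [MeasurableEquiv.coe_smul₀] at e
  rw [← e, e2, lintegral_smul_measure]
  simp [abs_of_pos (pow_pos hr l)]

lemma invFT_eq (l : ℕ) (g : EuclideanSpace ℝ (Fin l) → ℂ) (H : EuclideanSpace ℝ (Fin l)) :
    invFT l g H = (((2 * Real.pi) ^ l : ℝ) : ℂ)⁻¹ * 𝓕 (fun x => g (-x)) ((2 * Real.pi)⁻¹ • H) := by
  unfold invFT
  rw [← integral_neg_eq_self, Real.fourier_eq']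
  congr 2
  ext v
  rw [smul_eq_mul, mul_comm]
  congr 2
  rw [inner_smul_right, inner_neg_left]
  push_cast
  field_simp

lemma invFT_planch (l : ℕ) (g : EuclideanSpace ℝ (Fin l) → ℂ)
    (h1 : Integrable g) (h2 : MemLp g 2) :
    ∫⁻ x, ‖invFT l g x‖ₑ ^ 2 ≤ ∫⁻ x, ‖g x‖ₑ ^ 2 := by
  have hn : MeasurePreserving (fun x : EuclideanSpace ℝ (Fin l) => -x) volume volume :=
    Measure.measurePreserving_neg _
  have e1 := aux_plancherel (fun x => g (-x)) h1.comp_neg (h2.comp_measurePreserving hn)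
  have e2 : ∫⁻ x, ‖g (-x)‖ₑ ^ 2 = ∫⁻ x, ‖g x‖ₑ ^ 2 := lintegral_neg_eq_self (fun x => ‖g x‖ₑ ^ 2)
  have e3 := aux_lintegral_smul l (fun x => ‖𝓕 (fun x => g (-x)) x‖ₑ ^ 2) (2 * π) (by positivity)
  have e5 : ‖(((2 * Real.pi) ^ l : ℝ) : ℂ)⁻¹‖ₑ = ENNReal.ofReal ((2 * π) ^ l)⁻¹ := by
    rw [← ofReal_norm, norm_inv, Complex.norm_real, Real.norm_of_nonneg (by positivity)]
  simp only [invFT_eq, enorm_mul, mul_pow _ _ 2]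
  rw [lintegral_const_mul' _ _ (by rw [e5]; simp), e3, e1, e2, ← mul_assoc]
  have hp : (1:ℝ) ≤ (2 * π) ^ l := one_le_pow₀ (by linarith [Real.pi_gt_three])
  rw [e5, ← ENNReal.ofReal_pow (by positivity), ← ENNReal.ofReal_mul (by positivity)]
  have : ((2 * π) ^ l)⁻¹ ^ 2 * (2 * π) ^ l ≤ 1 := by
    rw [pow_two, mul_assoc, inv_mul_cancel₀ (by positivity), mul_one]
    exact inv_le_one_of_one_le₀ hp
  calc _ ≤ 1 * ∫⁻ x, ‖g x‖ₑ ^ 2 := by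
        gcongr
        exact ENNReal.ofReal_le_one.2 this
    _ = _ := one_mul _


/-- Bounded measurable functions with bounded support. -/
def NiceF {l : ℕ} (g : EuclideanSpace ℝ (Fin l) → ℂ) : Prop :=
  AEStronglyMeasurable g volume ∧ ∃ B ρ : ℝ, (∀ x, ‖g x‖ ≤ B) ∧ ∀ x, ρ < ‖x‖ → g x = 0

lemma NiceF.memLp {l : ℕ} {g : EuclideanSpace ℝ (Fin l) → ℂ} (hg : NiceF g) (p : ℝ≥0∞) :
    MemLp g p := by
  obtain ⟨hm, B, ρ, hB, hρ⟩ := hg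
  have h1 : MemLp ((Metric.closedBall (0 : EuclideanSpace ℝ (Fin l)) ρ).indicator g) p := by
    rw [memLp_indicator_iff_restrict measurableSet_closedBall]
    have : IsFiniteMeasure ((volume : Measure (EuclideanSpace ℝ (Fin l))).restrict
        (Metric.closedBall 0 ρ)) := ⟨by simpa using measure_closedBall_lt_top⟩
    exact MemLp.of_bound hm.restrict B (Filter.Eventually.of_forall hB)
  convert h1 using 1
  ext x
  by_cases hx : x ∈ Metric.closedBall (0 : EuclideanSpace ℝ (Fin l)) ρ
  · rw [Set.indicator_of_mem hx]
  · rw [Set.indicator_of_notMem hx]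
    apply hρ
    simpa using hx

lemma NiceF.integrable {l : ℕ} {g : EuclideanSpace ℝ (Fin l) → ℂ} (hg : NiceF g) :
    Integrable g := memLp_one_iff_integrable.1 (hg.memLp 1)

lemma NiceF.mul {l : ℕ} {g q : EuclideanSpace ℝ (Fin l) → ℂ} (hg : NiceF g) (hq : Continuous q) :
    NiceF (fun x => q x * g x) := by
  obtain ⟨hm, B, ρ, hB, hρ⟩ := hg
  obtain ⟨C, hC⟩ := (isCompact_closedBall (0 : EuclideanSpace ℝ (Fin l)) ρ).exists_bound_of_continuousOn
    hq.continuousOn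
  refine ⟨hq.aestronglyMeasurable.mul hm, |C| * |B|, ρ, fun x => ?_, fun x hx => by simp [hρ x hx]⟩
  by_cases hx : ρ < ‖x‖
  · simp only [hρ x hx, mul_zero, norm_zero]; positivity
  · rw [norm_mul]
    gcongr
    · exact (hC x (by simpa using hx)).trans (le_abs_self _)
    · exact (hB x).trans (le_abs_self _)

lemma NiceF.shift {l : ℕ} {g : EuclideanSpace ℝ (Fin l) → ℂ} (hg : NiceF g)
    (h : EuclideanSpace ℝ (Fin l)) : NiceF (fun x => g (x + h)) := by
  obtain ⟨hm, B, ρ, hB, hρ⟩ := hg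
  refine ⟨hm.comp_measurePreserving (measurePreserving_add_right volume h), B, ρ + ‖h‖,
    fun x => hB _, fun x hx => hρ _ ?_⟩
  have := norm_sub_le (x + h) h
  rw [add_sub_cancel_right] at this
  linarith

lemma NiceF.sub {l : ℕ} {f g : EuclideanSpace ℝ (Fin l) → ℂ} (hf : NiceF f) (hg : NiceF g) :
    NiceF (fun x => f x - g x) := by
  obtain ⟨hm, B, ρ, hB, hρ⟩ := hg
  obtain ⟨hm', B', ρ', hB', hρ'⟩ := hf
  refine ⟨hm'.sub hm, B' + B, max ρ ρ', fun x => ?_, fun x hx => ?_⟩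
  · exact (norm_sub_le _ _).trans (add_le_add (hB' x) (hB x))
  · show f x - g x = 0
    rw [hρ x ((le_max_left _ _).trans_lt hx), hρ' x ((le_max_right _ _).trans_lt hx), sub_zero]

lemma NiceF.fwdDiff {l : ℕ} {g : EuclideanSpace ℝ (Fin l) → ℂ} (hg : NiceF g)
    (h : EuclideanSpace ℝ (Fin l)) (n : ℕ) : NiceF ((fwdDiff h)^[n] g) := by
  induction n with
  | zero => exact hg
  | succ n ih =>
    rw [Function.iterate_succ_apply']
    exact (ih.shift h).sub ih

lemma NiceF.integrable_exp {l : ℕ} {g : EuclideanSpace ℝ (Fin l) → ℂ} (hg : NiceF g)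
    (H : EuclideanSpace ℝ (Fin l)) :
    Integrable (fun lam => g lam * Complex.exp (Complex.I * ((inner ℝ lam H : ℝ) : ℂ))) := by
  have := (hg.mul (q := fun lam => Complex.exp (Complex.I * ((inner ℝ lam H : ℝ) : ℂ)))
    (by fun_prop)).integrable
  simpa only [mul_comm] using this

lemma invFT_fwdDiff {l : ℕ} {g : EuclideanSpace ℝ (Fin l) → ℂ} (hg : NiceF g)
    (h H : EuclideanSpace ℝ (Fin l)) :
    invFT l (fwdDiff h g) H
      = (Complex.exp (-(Complex.I * ((inner ℝ h H : ℝ) : ℂ))) - 1) * invFT l g H := by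
  unfold invFT
  simp only [fwdDiff, sub_mul]
  rw [integral_sub ((hg.shift h).integrable_exp H) (hg.integrable_exp H)]
  rw [← integral_sub_right_eq_self (μ := volume) (fun lam => g (lam + h) * Complex.exp (Complex.I * ((inner ℝ lam H : ℝ) : ℂ))) h]
  have : ∀ x : EuclideanSpace ℝ (Fin l), g (x - h + h) * Complex.exp (Complex.I * ((inner ℝ (x - h) H : ℝ) : ℂ))
      = Complex.exp (-(Complex.I * ((inner ℝ h H : ℝ) : ℂ))) *
        (g x * Complex.exp (Complex.I * ((inner ℝ x H : ℝ) : ℂ))) := by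
    intro x
    rw [sub_add_cancel, mul_left_comm, ← Complex.exp_add, inner_sub_left]
    congr 2
    push_cast; ring
  simp only [this]
  rw [integral_const_mul]
  ring

lemma invFT_fwdDiff_iter {l : ℕ} {g : EuclideanSpace ℝ (Fin l) → ℂ} (hg : NiceF g)
    (h H : EuclideanSpace ℝ (Fin l)) (n : ℕ) :
    invFT l ((fwdDiff h)^[n] g) H
      = (Complex.exp (-(Complex.I * ((inner ℝ h H : ℝ) : ℂ))) - 1) ^ n * invFT l g H := by
  induction n with
  | zero => simp
  | succ n ih =>
    rw [Function.iterate_succ_apply', invFT_fwdDiff (hg.fwdDiff h n), ih]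
    ring

lemma invFT_fderiv {l : ℕ} {g : EuclideanSpace ℝ (Fin l) → ℂ} (hg : NiceF g)
    (H : EuclideanSpace ℝ (Fin l)) (i : Fin l) :
    fderiv ℝ (invFT l g) H (EuclideanSpace.single i 1)
      = invFT l (fun x => (Complex.I * ((x i : ℝ) : ℂ)) * g x) H := by
  set L : EuclideanSpace ℝ (Fin l) →L[ℝ] EuclideanSpace ℝ (Fin l) →L[ℝ] ℝ :=
    (-(2 * π)⁻¹) • innerSL ℝ with hL
  have hLa : ∀ v w, L v w = -(2 * π)⁻¹ * inner ℝ v w := fun v w => rfl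
  have e1 : invFT l g = fun H => (((2 * Real.pi) ^ l : ℝ) : ℂ)⁻¹ *
      VectorFourier.fourierIntegral 𝐞 volume L.toLinearMap₁₂ g H := by
    ext H
    unfold invFT VectorFourier.fourierIntegral
    congr 2
    ext v
    rw [Circle.smul_def, smul_eq_mul, Real.fourierChar_apply, mul_comm]
    congr 2
    rw [show (L.toLinearMap₁₂ v) H = -(2 * π)⁻¹ * inner ℝ v H from hLa v H]
    push_cast
    field_simp
  have hx : Integrable (fun v => ‖v‖ * ‖g v‖) := by
    have := (hg.mul (q := fun v => ((‖v‖ : ℝ) : ℂ)) (by fun_prop)).integrable.norm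
    simpa using this
  have hd := VectorFourier.hasFDerivAt_fourierIntegral L hg.integrable hx H
  have hd2 := hd.const_mul ((((2 * Real.pi) ^ l : ℝ) : ℂ)⁻¹)
  rw [e1, hd2.fderiv]
  have hInteg : Integrable (VectorFourier.fourierSMulRight L g) := by
    refine Integrable.mono' (hx.const_mul (2 * π * ‖L‖)) ?_ ?_
    · exact hg.integrable.1.fourierSMulRight
    · filter_upwards with v
      rw [← mul_assoc]
      exact VectorFourier.norm_fourierSMulRight_le L g v
  rw [smul_apply, smul_eq_mul,
    VectorFourier.fourierIntegral_continuousLinearMap_apply Real.continuous_fourierChar hInteg]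
  unfold invFT VectorFourier.fourierIntegral
  congr 2
  ext v
  rw [Circle.smul_def, smul_eq_mul, Real.fourierChar_apply, mul_comm]
  congr 1
  · beta_reduce
    rw [VectorFourier.fourierSMulRight_apply, hLa, EuclideanSpace.inner_single_right]
    simp
    field_simp
  · congr 1
    rw [show (L.toLinearMap₁₂ v) H = -(2 * π)⁻¹ * inner ℝ v H from hLa v H]
    push_cast
    field_simp

lemma mderiv_invFT {l : ℕ} {g : EuclideanSpace ℝ (Fin l) → ℂ} (hg : NiceF g) (L : List (Fin l)) :
    mderiv L (invFT l g) = invFT l (fun x => (L.map (fun i => Complex.I * ((x i : ℝ) : ℂ))).prod * g x) := by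
  induction L with
  | nil => simp [mderiv]
  | cons i L ih =>
    ext H
    have hn : NiceF (fun x : EuclideanSpace ℝ (Fin l) =>
        (L.map (fun i => Complex.I * ((x i : ℝ) : ℂ))).prod * g x) := by
      apply hg.mul
      apply continuous_list_prod
      intro i _
      fun_prop
    simp only [mderiv]
    rw [ih, invFT_fderiv hn]
    simp only [List.map_cons, List.prod_cons, mul_assoc]


open scoped fwdDiff

lemma fwdDiff_hasDerivAt (f f' : ℝ → ℂ) (t : ℝ) (ht : 0 ≤ t) (N : ℕ) :
    ∀ s : ℝ, (∀ y ∈ Set.Icc s (s + N * t), HasDerivAt f (f' y) y) →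
      HasDerivAt ((fwdDiff t)^[N] f) ((fwdDiff t)^[N] f' s) s := by
  induction N with
  | zero =>
    intro s h
    simpa using h s (by simp)
  | succ N ih =>
    intro s h
    rw [Function.iterate_succ_apply', Function.iterate_succ_apply']
    have hN : (0:ℝ) ≤ N * t := by positivity
    have h1 := ih (s + t) (fun y hy => h y (by
      simp only [Set.mem_Icc] at hy ⊢; push_cast; constructor <;> linarith [hy.1, hy.2]))
    have h2 := ih s (fun y hy => h y (by
      simp only [Set.mem_Icc] at hy ⊢; push_cast; constructor <;> linarith [hy.1, hy.2]))
    exact (h1.comp_add_const s t).sub h2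

lemma fwdDiff_norm_le (f : ℕ → ℝ → ℂ) (t : ℝ) (ht : 0 ≤ t) (C : ℝ) (N : ℕ) :
    ∀ (m : ℕ) (x : ℝ), (∀ n, ∀ y ∈ Set.Icc x (x + N * t), HasDerivAt (f n) (f (n + 1) y) y) →
      (∀ y ∈ Set.Icc x (x + N * t), ‖f (m + N) y‖ ≤ C) →
      ‖(fwdDiff t)^[N] (f m) x‖ ≤ C * t ^ N := by
  induction N with
  | zero =>
    intro m x _ h
    simpa using h x (by simp)
  | succ N ih =>
    intro m x hd hb
    have hN : (0:ℝ) ≤ N * t := by positivity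
    rw [Function.iterate_succ_apply']
    have hsub : ∀ s ∈ Set.Icc x (x + t), ∀ y ∈ Set.Icc s (s + N * t),
        y ∈ Set.Icc x (x + (N + 1 : ℕ) * t) := by
      intro s hs y hy
      simp only [Set.mem_Icc] at hs hy ⊢; push_cast
      constructor <;> linarith [hy.1, hy.2, hs.1, hs.2]
    have key := Convex.norm_image_sub_le_of_norm_hasDerivWithin_le
      (f := (fwdDiff t)^[N] (f m)) (f' := (fwdDiff t)^[N] (f (m + 1))) (C := C * t ^ N)
      (s := Set.Icc x (x + t)) (x := x) (y := x + t)
      (fun s hs => (fwdDiff_hasDerivAt (f m) (f (m + 1)) t ht N s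
        (fun y hy => hd m y (hsub s hs y hy))).hasDerivWithinAt)
      (fun s hs => ih (m + 1) s (fun n y hy => hd n y (hsub s hs y hy))
        (fun y hy => by
          have := hb y (hsub s hs y hy)
          rwa [show m + (N + 1) = m + 1 + N by ring] at this))
      (convex_Icc _ _) (by simp [ht]) (by simp [ht])
    rw [add_sub_cancel_left, Real.norm_of_nonneg ht] at key
    calc _ ≤ C * t ^ N * t := key
      _ = _ := by ring

section core

variable {l : ℕ}

/-- The function `(1 - ‖x‖²)_+^w q(x)`. -/
noncomputable def bumpG (w : ℂ) (q : EuclideanSpace ℝ (Fin l) → ℂ)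
    (x : EuclideanSpace ℝ (Fin l)) : ℂ :=
  if 0 < 1 - ‖x‖ ^ 2 then ((1 - ‖x‖ ^ 2 : ℝ) : ℂ) ^ w * q x else 0

/-- Coefficients of the iterated directional derivatives. -/
noncomputable def qseq (w : ℂ) (v : EuclideanSpace ℝ (Fin l)) (q : EuclideanSpace ℝ (Fin l) → ℂ) :
    ℕ → EuclideanSpace ℝ (Fin l) → ℂ
  | 0 => q
  | n + 1 => fun x => ((1 - ‖x‖ ^ 2 : ℝ) : ℂ) * fderiv ℝ (qseq w v q n) x v
      - 2 * (w - n) * ((inner ℝ x v : ℝ) : ℂ) * qseq w v q n x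

lemma qseq_contDiff (w : ℂ) (v : EuclideanSpace ℝ (Fin l)) (q : EuclideanSpace ℝ (Fin l) → ℂ)
    (hq : ContDiff ℝ ((⊤ : ℕ∞) : WithTop ℕ∞) q) (n : ℕ) :
    ContDiff ℝ ((⊤ : ℕ∞) : WithTop ℕ∞) (qseq w v q n) := by
  induction n with
  | zero => exact hq
  | succ n ih =>
    have h1 : ContDiff ℝ ((⊤ : ℕ∞) : WithTop ℕ∞) (fun x => fderiv ℝ (qseq w v q n) x v) :=
      (ih.fderiv_right (m := ((⊤ : ℕ∞) : WithTop ℕ∞)) (by simp)).clm_apply contDiff_const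
    have h2 : ContDiff ℝ ((⊤ : ℕ∞) : WithTop ℕ∞)
        (fun x : EuclideanSpace ℝ (Fin l) => ((1 - ‖x‖ ^ 2 : ℝ) : ℂ)) :=
      Complex.ofRealCLM.contDiff.comp (contDiff_const.sub (contDiff_norm_sq ℝ))
    have h3 : ContDiff ℝ ((⊤ : ℕ∞) : WithTop ℕ∞)
        (fun x : EuclideanSpace ℝ (Fin l) => ((inner ℝ x v : ℝ) : ℂ)) :=
      Complex.ofRealCLM.contDiff.comp (contDiff_id.inner ℝ contDiff_const)
    exact (h2.mul h1).sub ((contDiff_const.mul h3).mul ih)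

/-- The iterated directional derivatives inside the ball. -/
noncomputable def Dseq (w : ℂ) (v : EuclideanSpace ℝ (Fin l)) (q : EuclideanSpace ℝ (Fin l) → ℂ)
    (n : ℕ) (y : EuclideanSpace ℝ (Fin l)) : ℂ :=
  ((1 - ‖y‖ ^ 2 : ℝ) : ℂ) ^ (w - n) * qseq w v q n y

lemma Dseq_hasDerivAt (w : ℂ) (v : EuclideanSpace ℝ (Fin l)) (q : EuclideanSpace ℝ (Fin l) → ℂ)
    (hq : ContDiff ℝ ((⊤ : ℕ∞) : WithTop ℕ∞) q) (n : ℕ) (x : EuclideanSpace ℝ (Fin l)) (s : ℝ)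
    (h : ‖x + s • v‖ < 1) :
    HasDerivAt (fun s : ℝ => Dseq w v q n (x + s • v)) (Dseq w v q (n + 1) (x + s • v)) s := by
  have hline : HasDerivAt (fun s : ℝ => x + s • v) v s := by
    simpa using ((hasDerivAt_id s).smul_const v).const_add x
  have hpos : 0 < 1 - ‖x + s • v‖ ^ 2 := by nlinarith [norm_nonneg (x + s • v)]
  have h1 : HasDerivAt (fun s : ℝ => qseq w v q n (x + s • v))
      (fderiv ℝ (qseq w v q n) (x + s • v) v) s :=
    (((qseq_contDiff w v q hq n).differentiable (by simp)) (x + s • v)).hasFDerivAt.comp_hasDerivAt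
      s hline
  have h2 : HasDerivAt (fun s : ℝ => 1 - ‖x + s • v‖ ^ 2) (-(2 * inner ℝ (x + s • v) v)) s := by
    simpa using (hline.norm_sq).const_sub 1
  have h3 := h2.ofReal_comp
  have h40 : HasDerivAt (fun u : ℂ => u ^ (w - n)) _ ((1 - ‖x + s • v‖ ^ 2 : ℝ) : ℂ) :=
    (hasDerivAt_id _).cpow_const (c := w - n) (Or.inl (by rw [id, Complex.ofReal_re]; exact hpos))
  have h4 := HasDerivAt.comp s h40 h3
  have h5 := h4.mul h1
  refine h5.congr_deriv ?_
  have hne : ((1 - ‖x + s • v‖ ^ 2 : ℝ) : ℂ) ≠ 0 := by exact_mod_cast hpos.ne'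
  have e : ((1 - ‖x + s • v‖ ^ 2 : ℝ) : ℂ) ^ (w - n)
      = ((1 - ‖x + s • v‖ ^ 2 : ℝ) : ℂ) ^ (w - n - 1) * ((1 - ‖x + s • v‖ ^ 2 : ℝ) : ℂ) := by
    rw [Complex.cpow_sub (w - n) 1 hne, Complex.cpow_one]
    field_simp
  simp only [Dseq, qseq, Function.comp, id]
  rw [e, show w - ((n + 1 : ℕ) : ℂ) = w - n - 1 by push_cast; ring]
  push_cast
  ring

lemma fwdDiff_line (G : EuclideanSpace ℝ (Fin l) → ℂ) (v x : EuclideanSpace ℝ (Fin l)) (t : ℝ)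
    (N : ℕ) (f : ℝ → ℂ) (hf : ∀ k : ℕ, k ≤ N → G (x + (k * t) • v) = f (k * t)) :
    (fwdDiff (t • v))^[N] G x = (fwdDiff t)^[N] f 0 := by
  rw [fwdDiff_iter_eq_sum_shift, fwdDiff_iter_eq_sum_shift]
  apply Finset.sum_congr rfl
  intro k hk
  have := hf k (by simpa [Nat.lt_succ_iff] using hk)
  rw [← Nat.cast_smul_eq_nsmul ℝ k (t • v), smul_smul, this]
  simp

lemma bumpG_fwdDiff_bound (w : ℂ) (hw : 0 ≤ w.re) (v : EuclideanSpace ℝ (Fin l)) (hv : ‖v‖ = 1)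
    (q : EuclideanSpace ℝ (Fin l) → ℂ)
    (hq : ContDiff ℝ ((⊤ : ℕ∞) : WithTop ℕ∞) q) (N : ℕ) (hN : w.re ≤ N) (hN1 : 1 ≤ N) :
    ∃ C : ℝ, 0 ≤ C ∧ ∀ t : ℝ, 0 < t → t ≤ 2 → ∀ x,
      ‖(fwdDiff (t • v))^[N] (bumpG w q) x‖ ≤
        (Set.Iio (1 + 2 * N : ℝ)).indicator
          (fun r => C * (t ^ N * (t + |1 - r|) ^ (w.re - N))) ‖x‖ := by
  obtain ⟨B, hB⟩ := (isCompact_closedBall (0 : EuclideanSpace ℝ (Fin l)) 1).exists_bound_of_continuousOn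
    (qseq_contDiff w v q hq N).continuous.continuousOn
  obtain ⟨B0, hB0⟩ := (isCompact_closedBall (0 : EuclideanSpace ℝ (Fin l)) 1).exists_bound_of_continuousOn
    hq.continuous.continuousOn
  have hB' : 0 ≤ B := (norm_nonneg _).trans (hB 0 (by simp))
  have hB0' : 0 ≤ B0 := (norm_nonneg _).trans (hB0 0 (by simp))
  have hNr : (1:ℝ) ≤ N := by exact_mod_cast hN1
  set K : ℝ := 2 * N + 1 with hK
  set C1 : ℝ := (4⁻¹ : ℝ) ^ (w.re - N) * B with hC1
  set C2 : ℝ := 2 ^ N * (B0 * (6 * N) ^ w.re) * (K ^ (w.re - N))⁻¹ with hC2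
  have hC1' : 0 ≤ C1 := by positivity
  have hC2' : 0 ≤ C2 := by positivity
  refine ⟨C1 + C2, by positivity, fun t ht ht2 x => ?_⟩
  have hNt : t ≤ N * t := by nlinarith
  have hline : ∀ s : ℝ, 0 ≤ s → s ≤ N * t → |‖x + s • v‖ - ‖x‖| ≤ N * t := by
    intro s hs hs2
    have := abs_norm_sub_norm_le (x + s • v) x
    rw [add_sub_cancel_left, norm_smul, hv, mul_one, Real.norm_of_nonneg hs] at this
    exact this.trans hs2
  have hkt : ∀ k : ℕ, k ≤ N → (k : ℝ) * t ≤ N * t := by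
    intro k hk
    gcongr
  have hbump : ∀ y : EuclideanSpace ℝ (Fin l), 1 ≤ ‖y‖ → bumpG w q y = 0 := by
    intro y hy
    rw [bumpG, if_neg]
    nlinarith
  by_cases hbig : 1 + N * t ≤ ‖x‖
  · have : (fwdDiff (t • v))^[N] (bumpG w q) x = 0 := by
      rw [fwdDiff_line (bumpG w q) v x t N (fun _ => 0)]
      · rw [fwdDiff_iter_eq_sum_shift]; simp
      · intro k hk
        apply hbump
        have := abs_le.1 (hline (k * t) (by positivity) (hkt k hk))
        linarith [this.1]
    rw [this, norm_zero]
    apply Set.indicator_nonneg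
    intro r _
    positivity
  push Not at hbig
  rw [Set.indicator_of_mem (by simp only [Set.mem_Iio]; nlinarith)]
  by_cases hfar : ‖x‖ ≤ 1 - 2 * N * t
  · have hd : |1 - ‖x‖| = 1 - ‖x‖ := abs_of_nonneg (by nlinarith)
    have hlt : ∀ s ∈ Set.Icc (0:ℝ) (0 + N * t), ‖x + s • v‖ < 1 := by
      intro s hs
      have := abs_le.1 (hline s hs.1 (by simpa using hs.2))
      linarith [this.2]
    rw [fwdDiff_line (bumpG w q) v x t N (fun s => Dseq w v q 0 (x + s • v))]
    · have key := fwdDiff_norm_le (fun n s => Dseq w v q n (x + s • v)) t ht.le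
        (C1 * (t + |1 - ‖x‖|) ^ (w.re - N)) N 0 0
        (fun n y hy => Dseq_hasDerivAt w v q hq n x y (hlt y hy)) ?_
      · calc _ ≤ _ := key
          _ = C1 * (t ^ N * (t + |1 - ‖x‖|) ^ (w.re - N)) := by ring
          _ ≤ _ := by
            gcongr
            linarith
      · intro s hs
        have hs1 := hlt s hs
        have hpos : 0 < 1 - ‖x + s • v‖ ^ 2 := by nlinarith [norm_nonneg (x + s • v)]
        have hs2 := abs_le.1 (hline s hs.1 (by simpa using hs.2))
        rw [zero_add, Dseq, norm_mul, Complex.norm_cpow_eq_rpow_re_of_pos hpos]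
        have e1 : (w - (N : ℂ)).re = w.re - N := by simp
        rw [e1, hC1, mul_right_comm, ← Real.mul_rpow (by norm_num) (by positivity)]
        refine mul_le_mul ?_ ?_ (norm_nonneg _) (by positivity)
        · apply Real.rpow_le_rpow_of_nonpos
          · positivity
          · rw [hd]
            nlinarith [norm_nonneg (x + s • v), hs2.2]
          · linarith
        · exact hB _ (by simpa using hs1.le)
    · intro k hk
      have := hlt (k * t) ⟨by positivity, by simpa using hkt k hk⟩
      rw [bumpG, if_pos (by nlinarith [norm_nonneg (x + (k * t) • v)])]
      simp [Dseq, qseq]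
  · push Not at hfar
    have habs : t + |1 - ‖x‖| ≤ K * t := by
      have : |1 - ‖x‖| ≤ 2 * N * t := abs_le.2 ⟨by linarith, by linarith⟩
      rw [hK]; linarith
    have hterm : ∀ k : ℕ, k ≤ N → ‖bumpG w q (x + k • t • v)‖ ≤ B0 * (6 * N) ^ w.re * t ^ w.re := by
      intro k hk
      rw [← Nat.cast_smul_eq_nsmul ℝ k (t • v), smul_smul]
      have h2 := abs_le.1 (hline (k * t) (by positivity) (hkt k hk))
      by_cases h1 : 1 ≤ ‖x + ((k:ℝ) * t) • v‖
      · rw [hbump _ h1, norm_zero]; positivity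
      · push Not at h1
        have hpos : 0 < 1 - ‖x + ((k:ℝ) * t) • v‖ ^ 2 := by
          nlinarith [norm_nonneg (x + ((k:ℝ) * t) • v)]
        rw [bumpG, if_pos hpos, norm_mul, Complex.norm_cpow_eq_rpow_re_of_pos hpos, mul_assoc,
          ← Real.mul_rpow (by positivity) ht.le, mul_comm]
        gcongr
        · exact hB0 _ (by simpa using h1.le)
        · nlinarith [norm_nonneg (x + ((k:ℝ) * t) • v), h2.1]
    have hsum : ‖(fwdDiff (t • v))^[N] (bumpG w q) x‖ ≤ 2 ^ N * (B0 * (6 * N) ^ w.re * t ^ w.re) := by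
      rw [fwdDiff_iter_eq_sum_shift]
      refine (norm_sum_le _ _).trans ?_
      have : (2:ℝ) ^ N = ∑ k ∈ Finset.range (N + 1), (N.choose k : ℝ) := by
        exact_mod_cast (Nat.sum_range_choose N).symm
      rw [this, Finset.sum_mul]
      apply Finset.sum_le_sum
      intro k hk
      have hk' : k ≤ N := by simpa [Nat.lt_succ_iff] using hk
      have e : ‖((-1 : ℤ) ^ (N - k) * (N.choose k : ℤ)) • bumpG w q (x + k • t • v)‖
          = (N.choose k : ℝ) * ‖bumpG w q (x + k • t • v)‖ := by
        rw [zsmul_eq_mul, norm_mul]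
        simp
      rw [e]
      gcongr
      exact hterm k hk'
    have hrp : K ^ (w.re - N) * t ^ w.re ≤ t ^ N * (t + |1 - ‖x‖|) ^ (w.re - N) := by
      calc K ^ (w.re - N) * t ^ w.re = t ^ N * (K * t) ^ (w.re - N) := by
            rw [Real.mul_rpow (by positivity) ht.le, Real.rpow_sub ht, Real.rpow_natCast]
            field_simp
        _ ≤ _ := by
            refine mul_le_mul_of_nonneg_left ?_ (by positivity)
            apply Real.rpow_le_rpow_of_nonpos
            · positivity
            · exact habs
            · linarith
    calc _ ≤ _ := hsum
      _ = C2 * (K ^ (w.re - N) * t ^ w.re) := by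
        have : K ^ (w.re - N) ≠ 0 := by positivity
        rw [hC2]
        field_simp
      _ ≤ (C1 + C2) * (t ^ N * (t + |1 - ‖x‖|) ^ (w.re - N)) := by
        gcongr
        linarith

end core


lemma integral_shift_bound (p : ℝ) (hp : 1 < p) (t : ℝ) (ht : 0 < t) :
    Integrable (fun r : ℝ => (t + |1 - r|) ^ (-p)) ∧
    ∫ r : ℝ, (t + |1 - r|) ^ (-p) = t ^ (1 - p) * ∫ u : ℝ, (1 + |u|) ^ (-p) := by
  have h0 : Integrable (fun u : ℝ => (1 + ‖u‖) ^ (-p)) :=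
    integrable_one_add_norm (by simpa using hp)
  have e : ∀ r : ℝ, (t + |1 - r|) ^ (-p) = t ^ (-p) * (1 + ‖t⁻¹ * (1 - r)‖) ^ (-p) := by
    intro r
    rw [← Real.mul_rpow ht.le (by positivity), norm_mul, Real.norm_of_nonneg (by positivity),
      Real.norm_eq_abs]
    congr 1
    field_simp
  constructor
  · simp only [e]
    apply Integrable.const_mul
    have h1 := h0.comp_mul_left' (inv_ne_zero ht.ne')
    exact h1.comp_sub_left 1
  · simp only [e]
    rw [integral_const_mul, integral_sub_left_eq_self (fun r => (1 + ‖t⁻¹ * r‖) ^ (-p)) volume 1,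
      Measure.integral_comp_mul_left (fun r => (1 + ‖r‖) ^ (-p))]
    simp only [inv_inv, abs_of_pos ht, smul_eq_mul, Real.norm_eq_abs]
    rw [← mul_assoc, show (1 - p) = -p + 1 by ring, Real.rpow_add ht, Real.rpow_one]

lemma bumpG_fwdDiff_L2 {l : ℕ} (hl : 1 ≤ l) (w : ℂ) (hw : 0 ≤ w.re)
    (v : EuclideanSpace ℝ (Fin l)) (hv : ‖v‖ = 1)
    (q : EuclideanSpace ℝ (Fin l) → ℂ)
    (hq : ContDiff ℝ ((⊤ : ℕ∞) : WithTop ℕ∞) q) (N : ℕ) (hN : w.re + 1 ≤ N) :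
    ∃ C : ℝ, 0 ≤ C ∧ ∀ t : ℝ, 0 < t → t ≤ 2 →
      ∫⁻ x, ‖(fwdDiff (t • v))^[N] (bumpG w q) x‖ₑ ^ 2 ≤ ENNReal.ofReal (C * t ^ (2 * w.re + 1)) := by
  have hN1 : 1 ≤ N := by
    have : (1:ℝ) ≤ N := by linarith
    exact_mod_cast this
  obtain ⟨C, hC, hb⟩ := bumpG_fwdDiff_bound w hw v hv q hq N (by linarith) hN1
  set ρ : ℝ := 1 + 2 * N with hρ
  set p : ℝ := 2 * (N - w.re) with hp
  have hp1 : 1 < p := by rw [hp]; linarith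
  set K0 := ∫ u : ℝ, (1 + |u|) ^ (-p) with hK0
  have hK0' : 0 ≤ K0 := integral_nonneg (fun u => by positivity)
  set V := (volume : Measure (EuclideanSpace ℝ (Fin l))).real (Metric.ball 0 1) with hV
  refine ⟨l * (V * (ρ ^ (l - 1) * (C ^ 2 * K0))), by positivity, fun t ht ht2 => ?_⟩
  have : Nontrivial (EuclideanSpace ℝ (Fin l)) := by
    have : Nonempty (Fin l) := ⟨⟨0, hl⟩⟩
    infer_instance
  obtain ⟨hInteg, hval⟩ := integral_shift_bound p hp1 t ht
  set f : ℝ → ℝ := (Set.Iio ρ).indicator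
    (fun r => C ^ 2 * t ^ (2 * N) * (t + |1 - r|) ^ (-p)) with hf
  have hf0 : ∀ r, 0 ≤ f r := fun r => Set.indicator_nonneg (fun r _ => by positivity) r
  have hpt : ∀ x, ‖(fwdDiff (t • v))^[N] (bumpG w q) x‖ₑ ^ 2 ≤ ENNReal.ofReal (f ‖x‖) := by
    intro x
    rw [← ofReal_norm, ← ENNReal.ofReal_pow (norm_nonneg _)]
    apply ENNReal.ofReal_le_ofReal
    have := pow_le_pow_left₀ (norm_nonneg _) (hb t ht ht2 x) 2
    refine this.trans (le_of_eq ?_)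
    rw [hf]
    by_cases hx : ‖x‖ ∈ Set.Iio ρ
    · rw [Set.indicator_of_mem hx, Set.indicator_of_mem hx]
      rw [mul_pow, mul_pow, ← pow_mul, mul_comm N 2, ← mul_assoc]
      congr 1
      rw [← Real.rpow_natCast, ← Real.rpow_mul (by positivity)]
      congr 1
      rw [hp]; push_cast; ring
    · rw [Set.indicator_of_notMem hx, Set.indicator_of_notMem hx]; simp
  have hdim : Module.finrank ℝ (EuclideanSpace ℝ (Fin l)) = l := by simp
  have hbd : ∀ y ∈ Set.Ioi (0:ℝ), y ^ (l - 1) • f y ≤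
      ρ ^ (l - 1) * (C ^ 2 * t ^ (2 * N)) * (t + |1 - y|) ^ (-p) := by
    intro y hy
    have hy' : 0 < y := hy
    rw [smul_eq_mul, mul_assoc]
    by_cases hyρ : y ∈ Set.Iio ρ
    · rw [hf, Set.indicator_of_mem hyρ]
      gcongr
      exact le_of_lt hyρ
    · rw [hf, Set.indicator_of_notMem hyρ, mul_zero]
      positivity
  have hmeas : Measurable f := by
    apply Measurable.indicator _ measurableSet_Iio
    fun_prop
  have hintR : Integrable (fun y => ρ ^ (l - 1) * (C ^ 2 * t ^ (2 * N)) * (t + |1 - y|) ^ (-p)) :=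
    hInteg.const_mul _
  have hI1 : IntegrableOn (fun y : ℝ => y ^ (l - 1) • f y) (Set.Ioi 0) := by
    refine Integrable.mono' hintR.integrableOn ?_ ?_
    · apply Measurable.aestronglyMeasurable
      fun_prop
    · rw [ae_restrict_iff' measurableSet_Ioi]
      filter_upwards with y hy
      rw [Real.norm_of_nonneg]
      · exact hbd y hy
      · exact smul_nonneg (pow_nonneg (le_of_lt hy) _) (hf0 y)
  have hI2 : Integrable (fun x : EuclideanSpace ℝ (Fin l) => f ‖x‖) := by
    have := (integrable_fun_norm_addHaar (volume : Measure (EuclideanSpace ℝ (Fin l))) (f := f)).2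
    rw [hdim] at this
    exact this hI1
  calc _ ≤ ∫⁻ x : EuclideanSpace ℝ (Fin l), ENNReal.ofReal (f ‖x‖) := lintegral_mono hpt
    _ = ENNReal.ofReal (∫ x : EuclideanSpace ℝ (Fin l), f ‖x‖) :=
      (ofReal_integral_eq_lintegral_ofReal hI2 (Filter.Eventually.of_forall fun x => hf0 _)).symm
    _ ≤ _ := by
      apply ENNReal.ofReal_le_ofReal
      rw [integral_fun_norm_addHaar, hdim, nsmul_eq_mul, smul_eq_mul]
      have h1 : ∫ y in Set.Ioi (0:ℝ), y ^ (l - 1) • f y ≤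
          ρ ^ (l - 1) * (C ^ 2 * t ^ (2 * N)) * (t ^ (1 - p) * K0) := by
        rw [← hval, ← integral_const_mul]
        refine (setIntegral_mono_on hI1 hintR.integrableOn measurableSet_Ioi hbd).trans ?_
        exact setIntegral_le_integral hintR (Filter.Eventually.of_forall fun y => by positivity)
      have h2 : t ^ (2 * N) * t ^ (1 - p) = t ^ (2 * w.re + 1) := by
        rw [← Real.rpow_natCast, ← Real.rpow_add ht]
        congr 1
        rw [hp]; push_cast; ring
      calc _ ≤ (l:ℝ) * (V * (ρ ^ (l - 1) * (C ^ 2 * t ^ (2 * N)) * (t ^ (1 - p) * K0))) := by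
            gcongr
        _ = _ := by
            rw [← h2]; ring


lemma NiceF.continuous_invFT {l : ℕ} {g : EuclideanSpace ℝ (Fin l) → ℂ} (hg : NiceF g) :
    Continuous (invFT l g) := by
  have h1 : Integrable (fun x => g (-x)) := hg.integrable.comp_neg
  have hF : Continuous (𝓕 (fun x => g (-x))) :=
    VectorFourier.fourierIntegral_continuous Real.continuous_fourierChar
      (by exact continuous_inner) h1
  have : invFT l g = fun H => (((2 * Real.pi) ^ l : ℝ) : ℂ)⁻¹ *
      𝓕 (fun x => g (-x)) ((2 * Real.pi)⁻¹ • H) := funext (invFT_eq l g)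
  rw [this]
  exact continuous_const.mul (hF.comp (continuous_const_smul _))

lemma exp_lower (l : ℕ) (x : ℝ) (h1 : 1 ≤ l * x ^ 2) (h2 : x ^ 2 ≤ 4) :
    1 ≤ 4 * l * ‖Complex.exp (-(Complex.I * (x : ℂ))) - 1‖ ^ 2 := by
  have e : Complex.exp (-(Complex.I * (x : ℂ))) = Complex.exp (Complex.I * ((-x : ℝ) : ℂ)) := by
    congr 1; push_cast; ring
  rw [e, Complex.norm_exp_I_mul_ofReal_sub_one, Real.norm_eq_abs, sq_abs, mul_pow]
  have hx : |(-x) / 2| ≤ 1 := by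
    rw [abs_le]; constructor <;> nlinarith
  have h3 := Real.mul_abs_le_abs_sin (x := -x / 2) (by linarith [Real.pi_gt_three])
  have h4 : (1 / 2 : ℝ) * |-x / 2| ≤ |Real.sin (-x / 2)| := by
    refine le_trans ?_ h3
    refine mul_le_mul_of_nonneg_right ?_ (abs_nonneg _)
    rw [div_le_div_iff₀ (by norm_num) (by positivity)]
    linarith [Real.pi_le_four]
  have h5 : (1 / 2 : ℝ) ^ 2 * (-x / 2) ^ 2 ≤ Real.sin (-x / 2) ^ 2 := by
    rw [← sq_abs (-x / 2), ← sq_abs (Real.sin _), ← mul_pow]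
    gcongr
  have h6 : (x ^ 2 / 16 : ℝ) ≤ Real.sin (-x / 2) ^ 2 := by
    refine le_trans (le_of_eq ?_) h5
    ring
  have hl : (0:ℝ) ≤ l := by positivity
  nlinarith

lemma annulus_bound {l : ℕ} {g : EuclideanSpace ℝ (Fin l) → ℂ} (hl : 1 ≤ l) (hg : NiceF g) (N : ℕ)
    (A : ℝ) (hA : 0 < A) :
    ∫⁻ H in {H : EuclideanSpace ℝ (Fin l) | A < ‖H‖ ∧ ‖H‖ ≤ 2 * A}, ‖invFT l g H‖ₑ ^ 2 ≤
      ENNReal.ofReal ((4 * l) ^ N) * ∑ j : Fin l,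
        ∫⁻ x, ‖(fwdDiff (A⁻¹ • EuclideanSpace.single j (1:ℝ)))^[N] g x‖ₑ ^ 2 := by
  have hS : MeasurableSet {H : EuclideanSpace ℝ (Fin l) | A < ‖H‖ ∧ ‖H‖ ≤ 2 * A} :=
    (measurableSet_lt measurable_const measurable_norm).inter
      (measurableSet_le measurable_norm measurable_const)
  set F : Fin l → EuclideanSpace ℝ (Fin l) → ℂ := fun j =>
    invFT l ((fwdDiff (A⁻¹ • EuclideanSpace.single j (1:ℝ)))^[N] g) with hF
  have hpt : ∀ H ∈ {H : EuclideanSpace ℝ (Fin l) | A < ‖H‖ ∧ ‖H‖ ≤ 2 * A},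
      ‖invFT l g H‖ₑ ^ 2 ≤ ENNReal.ofReal ((4 * l) ^ N) * ∑ j : Fin l, ‖F j H‖ₑ ^ 2 := by
    rintro H ⟨h1, h2⟩
    have hsum : ‖H‖ ^ 2 = ∑ j, H j ^ 2 := EuclideanSpace.real_norm_sq_eq H
    have hex : ∃ j, ‖H‖ ^ 2 ≤ l * H j ^ 2 := by
      by_contra hcon
      push Not at hcon
      have : Nonempty (Fin l) := ⟨⟨0, hl⟩⟩
      have h3 := Finset.sum_lt_sum_of_nonempty (s := (Finset.univ : Finset (Fin l)))
        Finset.univ_nonempty (fun j _ => hcon j)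
      rw [← Finset.mul_sum, ← hsum] at h3
      simp at h3
    obtain ⟨j, hj⟩ := hex
    have hjle : H j ^ 2 ≤ ‖H‖ ^ 2 := by
      rw [hsum]
      exact Finset.single_le_sum (f := fun j => H j ^ 2) (fun _ _ => sq_nonneg _) (Finset.mem_univ j)
    have hx := exp_lower l (A⁻¹ * H j) (by
        rw [mul_pow, inv_pow]
        rw [← mul_assoc, mul_comm (l:ℝ), mul_assoc, ← div_eq_inv_mul, le_div_iff₀ (by positivity)]
        nlinarith [norm_nonneg H]) (by
        rw [mul_pow, inv_pow, ← div_eq_inv_mul, div_le_iff₀ (by positivity)]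
        nlinarith [norm_nonneg H])
    have hFj : F j H = (Complex.exp (-(Complex.I * ((A⁻¹ * H j : ℝ) : ℂ))) - 1) ^ N * invFT l g H := by
      simp only [hF]
      rw [invFT_fwdDiff_iter hg, inner_smul_left, EuclideanSpace.inner_single_left]
      simp
    have hreal : ‖invFT l g H‖ ^ 2 ≤ (4 * l) ^ N * ‖F j H‖ ^ 2 := by
      rw [hFj, norm_mul, norm_pow, mul_pow _ _ 2, ← mul_assoc, ← pow_mul, mul_comm N 2, pow_mul, ← mul_pow]
      exact le_mul_of_one_le_left (by positivity) (one_le_pow₀ hx)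
    calc ‖invFT l g H‖ₑ ^ 2 = ENNReal.ofReal (‖invFT l g H‖ ^ 2) := by
          rw [← ofReal_norm, ENNReal.ofReal_pow (norm_nonneg _)]
      _ ≤ ENNReal.ofReal ((4 * l) ^ N * ‖F j H‖ ^ 2) := ENNReal.ofReal_le_ofReal hreal
      _ = ENNReal.ofReal ((4 * l) ^ N) * ‖F j H‖ₑ ^ 2 := by
          rw [ENNReal.ofReal_mul (by positivity), ENNReal.ofReal_pow (norm_nonneg _), ofReal_norm]
      _ ≤ _ := by
          gcongr
          exact Finset.single_le_sum (f := fun j => ‖F j H‖ₑ ^ 2) (fun _ _ => zero_le)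
            (Finset.mem_univ j)
  calc _ ≤ ∫⁻ H in {H : EuclideanSpace ℝ (Fin l) | A < ‖H‖ ∧ ‖H‖ ≤ 2 * A},
          ENNReal.ofReal ((4 * l) ^ N) * ∑ j : Fin l, ‖F j H‖ₑ ^ 2 := setLIntegral_mono' hS hpt
    _ ≤ ∫⁻ H, ENNReal.ofReal ((4 * l) ^ N) * ∑ j : Fin l, ‖F j H‖ₑ ^ 2 :=
        setLIntegral_le_lintegral _ _
    _ = ENNReal.ofReal ((4 * l) ^ N) * ∑ j : Fin l, ∫⁻ H, ‖F j H‖ₑ ^ 2 := by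
        rw [lintegral_const_mul' _ _ ENNReal.ofReal_ne_top, lintegral_finsetSum]
        intro j _
        have := (hg.fwdDiff (A⁻¹ • EuclideanSpace.single j (1:ℝ)) N).continuous_invFT
        exact (this.enorm.measurable).pow_const 2
    _ ≤ _ := by
        gcongr ENNReal.ofReal _ * ?_
        refine Finset.sum_le_sum fun j _ => ?_
        have := hg.fwdDiff (A⁻¹ • EuclideanSpace.single j (1:ℝ)) N
        exact invFT_planch l _ this.integrable (this.memLp 2)

lemma niceF_sRz (l : ℕ) (ρ₀ R : ℝ) (z : ℂ) (hz : 0 ≤ z.re) (hR : ρ₀ ^ 2 + 1 ≤ R) :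
    NiceF (sRz l ρ₀ R z) := by
  have hR1 : 1 ≤ R := by nlinarith [sq_nonneg ρ₀]
  refine ⟨?_, 1, R, fun x => ?_, fun x hx => ?_⟩
  · apply Measurable.aestronglyMeasurable
    unfold sRz
    apply Measurable.ite
    · exact measurableSet_lt measurable_const (by fun_prop)
    · fun_prop
    · fun_prop
  · unfold sRz
    split_ifs with h
    · rw [Complex.norm_cpow_eq_rpow_re_of_pos h]
      apply Real.rpow_le_one h.le _ hz
      have : 0 ≤ (ρ₀ ^ 2 + ‖x‖ ^ 2) / R := by positivity
      linarith
    · simp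
  · unfold sRz
    rw [if_neg]
    rw [not_lt, sub_nonpos, le_div_iff₀ (by linarith)]
    nlinarith [sq_nonneg ρ₀]

/-- The monomial attached to a list of directions. -/
noncomputable def monoL {l : ℕ} (L : List (Fin l)) (x : EuclideanSpace ℝ (Fin l)) : ℂ :=
  (L.map (fun i => Complex.I * ((x i : ℝ) : ℂ))).prod

lemma monoL_contDiff {l : ℕ} (L : List (Fin l)) :
    ContDiff ℝ ((⊤ : ℕ∞) : WithTop ℕ∞) (monoL L) := by
  induction L with
  | nil => exact contDiff_const
  | cons i L ih =>
    have h : ContDiff ℝ ((⊤ : ℕ∞) : WithTop ℕ∞)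
        (fun x : EuclideanSpace ℝ (Fin l) => Complex.I * ((x i : ℝ) : ℂ)) :=
      contDiff_const.mul (Complex.ofRealCLM.contDiff.comp
        (EuclideanSpace.proj (𝕜 := ℝ) i).contDiff)
    have := h.mul ih
    exact this

lemma monoL_smul {l : ℕ} (L : List (Fin l)) (r : ℝ) (y : EuclideanSpace ℝ (Fin l)) :
    monoL L (r • y) = (r : ℂ) ^ L.length * monoL L y := by
  induction L with
  | nil => simp [monoL]
  | cons i L ih =>
    simp only [monoL, List.map_cons, List.prod_cons, List.length_cons] at ih ⊢
    rw [ih]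
    simp
    ring

lemma sRz_scale (l : ℕ) (ρ₀ R : ℝ) (z : ℂ) (hR : ρ₀ ^ 2 + 1 ≤ R) (L : List (Fin l))
    (x : EuclideanSpace ℝ (Fin l)) :
    monoL L x * sRz l ρ₀ R z x =
      ((((R - ρ₀ ^ 2) / R : ℝ) : ℂ) ^ z * ((√(R - ρ₀ ^ 2) : ℝ) : ℂ) ^ L.length) *
        bumpG z (monoL L) ((√(R - ρ₀ ^ 2))⁻¹ • x) := by
  have hR1 : 1 ≤ R := by nlinarith [sq_nonneg ρ₀]
  have hM : 0 < R - ρ₀ ^ 2 := by linarith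
  set r := √(R - ρ₀ ^ 2) with hr
  have hr0 : 0 < r := Real.sqrt_pos.2 hM
  have hr2 : r ^ 2 = R - ρ₀ ^ 2 := Real.sq_sqrt hM.le
  have e1 : 1 - (ρ₀ ^ 2 + ‖x‖ ^ 2) / R = ((R - ρ₀ ^ 2) / R) * (1 - ‖r⁻¹ • x‖ ^ 2) := by
    rw [norm_smul, mul_pow, norm_inv, inv_pow, Real.norm_of_nonneg hr0.le, ← hr2]
    field_simp
    rw [hr2]; ring
  have hc : 0 < (R - ρ₀ ^ 2) / R := by positivity
  have hmono : monoL L x = (r : ℂ) ^ L.length * monoL L (r⁻¹ • x) := by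
    rw [← monoL_smul, smul_smul, mul_inv_cancel₀ hr0.ne', one_smul]
  unfold sRz bumpG
  rw [e1]
  by_cases h : 0 < 1 - ‖r⁻¹ • x‖ ^ 2
  · rw [if_pos (mul_pos hc h), if_pos h, hmono, Complex.ofReal_mul,
      Complex.mul_cpow_ofReal_nonneg hc.le h.le]
    ring
  · rw [if_neg, if_neg h]
    · simp
    · intro h'
      exact h ((mul_pos_iff_of_pos_left hc).1 h')

lemma fwdDiff_scale {l : ℕ} (G : EuclideanSpace ℝ (Fin l) → ℂ) (c : ℂ) (r : ℝ)
    (h x : EuclideanSpace ℝ (Fin l)) (N : ℕ) :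
    (fwdDiff h)^[N] (fun x => c * G (r • x)) x = c * (fwdDiff (r • h))^[N] G (r • x) := by
  rw [fwdDiff_iter_eq_sum_shift, fwdDiff_iter_eq_sum_shift, Finset.mul_sum]
  apply Finset.sum_congr rfl
  intro k _
  rw [smul_add, smul_comm r k h]
  simp only [zsmul_eq_mul]
  ring

lemma annulus_sRz (l : ℕ) (hl : 1 ≤ l) (ρ₀ : ℝ) (z : ℂ) (hz : 0 ≤ z.re) (L : List (Fin l)) :
    ∃ C : ℝ, 0 ≤ C ∧ ∀ R : ℝ, ρ₀ ^ 2 + 1 ≤ R → ∀ A : ℝ, 1 / 2 ≤ A →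
      ∫⁻ H in {H : EuclideanSpace ℝ (Fin l) | A < ‖H‖ ∧ ‖H‖ ≤ 2 * A},
        ‖mderiv L (invFT l (sRz l ρ₀ R z)) H‖ₑ ^ 2 ≤
      ENNReal.ofReal (C * ((√(R - ρ₀ ^ 2)) ^ (2 * L.length + l) *
        (A * √(R - ρ₀ ^ 2)) ^ (-(2 * z.re + 1)))) := by
  obtain ⟨N, hN⟩ := exists_nat_ge (z.re + 1)
  have hC := fun j : Fin l => bumpG_fwdDiff_L2 hl z hz (EuclideanSpace.single j (1:ℝ)) (by simp)
    (monoL L) (monoL_contDiff L) N hN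
  choose C hC0 hC using hC
  refine ⟨(4 * l) ^ N * ∑ j, C j, mul_nonneg (by positivity) (Finset.sum_nonneg fun j _ => hC0 j),
    fun R hR A hA => ?_⟩
  have hR1 : 1 ≤ R := by nlinarith [sq_nonneg ρ₀]
  have hM : 1 ≤ R - ρ₀ ^ 2 := by linarith
  have hnice := niceF_sRz l ρ₀ R z hz hR
  have hg : NiceF (fun x => monoL L x * sRz l ρ₀ R z x) :=
    hnice.mul (monoL_contDiff L).continuous
  rw [mderiv_invFT hnice]
  refine (annulus_bound hl hg N A (by linarith)).trans ?_
  rw [funext (sRz_scale l ρ₀ R z hR L)]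
  set r := √(R - ρ₀ ^ 2) with hr
  have hr1 : 1 ≤ r := Real.one_le_sqrt.2 hM
  have hr0 : 0 < r := by linarith
  set c : ℂ := (((R - ρ₀ ^ 2) / R : ℝ) : ℂ) ^ z * (r : ℂ) ^ L.length with hc
  have hcn : ‖c‖ ≤ r ^ L.length := by
    have h1 : 0 < (R - ρ₀ ^ 2) / R := by
      apply div_pos <;> linarith
    rw [hc, norm_mul, Complex.norm_cpow_eq_rpow_re_of_pos h1, norm_pow, Complex.norm_real,
      Real.norm_of_nonneg hr0.le]
    apply mul_le_of_le_one_left (by positivity)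
    apply Real.rpow_le_one h1.le _ hz
    rw [div_le_one (by linarith)]
    nlinarith [sq_nonneg ρ₀]
  have hterm : ∀ j : Fin l, ∫⁻ x, ‖(fwdDiff (A⁻¹ • EuclideanSpace.single j (1:ℝ)))^[N]
      (fun x => c * bumpG z (monoL L) (r⁻¹ • x)) x‖ₑ ^ 2 ≤
      ENNReal.ofReal (C j * (r ^ (2 * L.length + l) * (A * r) ^ (-(2 * z.re + 1)))) := by
    intro j
    simp only [fwdDiff_scale, enorm_mul, mul_pow]
    rw [lintegral_const_mul' _ _ (by simp), smul_smul]
    rw [aux_lintegral_smul l (fun y => ‖(fwdDiff ((r⁻¹ * A⁻¹) • EuclideanSpace.single j (1:ℝ)))^[N]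
      (bumpG z (monoL L)) y‖ₑ ^ 2) r hr0]
    have hAr : r⁻¹ * A⁻¹ = (A * r)⁻¹ := by rw [mul_inv]; ring
    have hArp : 0 < A * r := by positivity
    have h1 := hC j (r⁻¹ * A⁻¹) (by positivity) (by
      rw [hAr]
      apply inv_le_of_inv_le₀ (by norm_num)
      nlinarith)
    have h2 : ‖c‖ₑ ^ 2 ≤ ENNReal.ofReal (r ^ (2 * L.length)) := by
      rw [← ofReal_norm, ← ENNReal.ofReal_pow (norm_nonneg _)]
      apply ENNReal.ofReal_le_ofReal
      rw [mul_comm 2, pow_mul]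
      gcongr
    calc _ ≤ ENNReal.ofReal (r ^ (2 * L.length)) * (ENNReal.ofReal (r ^ l) *
          ENNReal.ofReal (C j * (r⁻¹ * A⁻¹) ^ (2 * z.re + 1))) := by gcongr
      _ = _ := by
        rw [← ENNReal.ofReal_mul (by positivity), ← ENNReal.ofReal_mul (by positivity), hAr,
          Real.inv_rpow hArp.le, ← Real.rpow_neg hArp.le]
        congr 1
        ring
  calc _ ≤ ENNReal.ofReal ((4 * l) ^ N) * ∑ j : Fin l,
        ENNReal.ofReal (C j * (r ^ (2 * L.length + l) * (A * r) ^ (-(2 * z.re + 1)))) := by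
        gcongr with j _
        exact hterm j
    _ = _ := by
      have hAr : 0 < A * r := by positivity
      rw [← ENNReal.ofReal_sum_of_nonneg (fun j _ => mul_nonneg (hC0 j) (by positivity)),
        ← ENNReal.ofReal_mul (by positivity), ← Finset.sum_mul, mul_assoc]

lemma tail_sRz (l : ℕ) (hl : 1 ≤ l) (ρ₀ : ℝ) (z : ℂ) (hz : 0 ≤ z.re) (L : List (Fin l)) :
    ∃ C : ℝ, 0 ≤ C ∧ ∀ R : ℝ, ρ₀ ^ 2 + 1 ≤ R → ∀ a : ℝ, 1 / 2 ≤ a →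
      ∫⁻ H in {H : EuclideanSpace ℝ (Fin l) | a < ‖H‖},
        ‖mderiv L (invFT l (sRz l ρ₀ R z)) H‖ₑ ^ 2 ≤
      ENNReal.ofReal (C * ((√(R - ρ₀ ^ 2)) ^ (2 * L.length + l) *
        (a * √(R - ρ₀ ^ 2)) ^ (-(2 * z.re + 1)))) := by
  obtain ⟨C, hC0, hC⟩ := annulus_sRz l hl ρ₀ z hz L
  refine ⟨2 * C, by positivity, fun R hR a ha => ?_⟩
  have hM : 1 ≤ R - ρ₀ ^ 2 := by linarith
  set r := √(R - ρ₀ ^ 2) with hr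
  have hr1 : 1 ≤ r := Real.one_le_sqrt.2 hM
  have har : 0 < a * r := by positivity
  set D := C * (r ^ (2 * L.length + l) * (a * r) ^ (-(2 * z.re + 1))) with hD
  have hD0 : 0 ≤ D := by positivity
  have hsub : {H : EuclideanSpace ℝ (Fin l) | a < ‖H‖} ⊆
      ⋃ n : ℕ, {H | 2 ^ n * a < ‖H‖ ∧ ‖H‖ ≤ 2 * (2 ^ n * a)} := by
    intro H hH
    have hH' : a < ‖H‖ := hH
    have ha0 : 0 < a := by linarith
    obtain ⟨n, hn1, hn2⟩ := exists_nat_pow_near (x := ‖H‖ / a) (y := 2)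
      ((one_le_div ha0).2 hH'.le) (by norm_num)
    rw [le_div_iff₀ ha0] at hn1
    rw [div_lt_iff₀ ha0] at hn2
    rcases hn1.lt_or_eq with h | h
    · exact Set.mem_iUnion.2 ⟨n, h, by rw [← mul_assoc, mul_comm (2:ℝ), ← pow_succ]; exact hn2.le⟩
    · cases n with
      | zero => simp at h; linarith
      | succ n =>
        refine Set.mem_iUnion.2 ⟨n, ?_, ?_⟩
        · rw [← h, pow_succ]
          have : 0 < 2 ^ n * a := by positivity
          linarith
        · rw [← h, pow_succ]
          linarith
  have hterm : ∀ n : ℕ, ∫⁻ H in {H : EuclideanSpace ℝ (Fin l) |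
      2 ^ n * a < ‖H‖ ∧ ‖H‖ ≤ 2 * (2 ^ n * a)}, ‖mderiv L (invFT l (sRz l ρ₀ R z)) H‖ₑ ^ 2
      ≤ ENNReal.ofReal (D * (1 / 2) ^ n) := by
    intro n
    have h2n : (1:ℝ) ≤ 2 ^ n := one_le_pow₀ (by norm_num)
    refine (hC R hR (2 ^ n * a) (by nlinarith)).trans ?_
    apply ENNReal.ofReal_le_ofReal
    rw [mul_assoc (2 ^ n) a, Real.mul_rpow (by positivity) har.le]
    have h1 : ((2:ℝ) ^ n) ^ (-(2 * z.re + 1)) ≤ (1 / 2) ^ n := by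
      calc ((2:ℝ) ^ n) ^ (-(2 * z.re + 1)) ≤ ((2:ℝ) ^ n) ^ (-1 : ℝ) :=
            Real.rpow_le_rpow_of_exponent_le h2n (by linarith)
        _ = _ := by rw [Real.rpow_neg_one, one_div, inv_pow]
    calc _ ≤ C * (r ^ (2 * L.length + l) * ((1 / 2) ^ n * (a * r) ^ (-(2 * z.re + 1)))) := by
          gcongr
      _ = _ := by rw [hD]; ring
  calc _ ≤ ∫⁻ H in ⋃ n : ℕ, {H : EuclideanSpace ℝ (Fin l) |
        2 ^ n * a < ‖H‖ ∧ ‖H‖ ≤ 2 * (2 ^ n * a)}, ‖mderiv L (invFT l (sRz l ρ₀ R z)) H‖ₑ ^ 2 :=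
        lintegral_mono_set hsub
    _ ≤ ∑' n : ℕ, ∫⁻ H in {H : EuclideanSpace ℝ (Fin l) |
        2 ^ n * a < ‖H‖ ∧ ‖H‖ ≤ 2 * (2 ^ n * a)}, ‖mderiv L (invFT l (sRz l ρ₀ R z)) H‖ₑ ^ 2 :=
        lintegral_iUnion_le _ _
    _ ≤ ∑' n : ℕ, ENNReal.ofReal (D * (1 / 2) ^ n) := ENNReal.tsum_le_tsum hterm
    _ = ENNReal.ofReal (∑' n : ℕ, D * (1 / 2) ^ n) :=
        (ENNReal.ofReal_tsum_of_nonneg (fun n => by positivity)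
          (summable_geometric_two.mul_left D)).symm
    _ = _ := by
        rw [tsum_mul_left, tsum_geometric_two, hD]
        congr 1; ring

/-- L² tail estimate for sums of multi-index derivatives of ℱ^{−1}s_R^z, for R ≥ ρ₀² + 1
and a ≥ 1/2:
(∫_{‖H‖>a} (Σ_{|α|≤2k} |∂^α(ℱ^{−1}s_R^z)(H)|)² dH)^{1/2}
  ≤ c R^{−(Re z − (2k + l/2) + 1/2)/2} a^{−Re z − 1/2}. -/
theorem invFT_sRz_L2_tail (l k : ℕ) (hl : 1 ≤ l) (ρ₀ : ℝ) (hρ : 0 ≤ ρ₀)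
    (z : ℂ) (hz : 0 ≤ z.re) :
    ∃ c : ℝ, 0 < c ∧ ∀ R : ℝ, ρ₀ ^ 2 + 1 ≤ R → ∀ a : ℝ, 1 / 2 ≤ a →
      Real.sqrt (∫ H in {H : EuclideanSpace ℝ (Fin l) | a < ‖H‖},
          (∑ α ∈ Finset.univ.filter
              (fun α : Fin l → Fin (2 * k + 1) => (∑ i, (α i : ℕ)) ≤ 2 * k),
            ‖partialD (fun i => (α i : ℕ)) (invFT l (sRz l ρ₀ R z)) H‖) ^ 2) ≤
        c * R ^ (-(z.re - (2 * k + (l : ℝ) / 2) + 1 / 2) / 2) * a ^ (-z.re - 1 / 2) := by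
  classical
  set S := Finset.univ.filter
    (fun α : Fin l → Fin (2 * k + 1) => (∑ i, (α i : ℕ)) ≤ 2 * k) with hS
  choose C hC0 hC using fun α : Fin l → Fin (2 * k + 1) => tail_sRz l hl ρ₀ z hz
    ((List.finRange l).flatMap fun i => List.replicate (α i : ℕ) i)
  set D : ℝ := S.card * ∑ α ∈ S, C α with hD
  have hD0 : 0 ≤ D := mul_nonneg (by positivity) (Finset.sum_nonneg fun α _ => hC0 α)
  set e : ℝ := -(z.re - (2 * k + (l : ℝ) / 2) + 1 / 2) / 2 with he
  have hB : 0 ≤ (1 + ρ₀ ^ 2) ^ |2 * e| := by positivity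
  refine ⟨D * (1 + ρ₀ ^ 2) ^ |2 * e| + 1, by positivity, fun R hR a ha => ?_⟩
  have ha0 : 0 < a := by linarith
  have hR1 : 1 ≤ R := by nlinarith [sq_nonneg ρ₀]
  have hM : 1 ≤ R - ρ₀ ^ 2 := by linarith
  have hr1 : 1 ≤ √(R - ρ₀ ^ 2) := Real.one_le_sqrt.2 hM
  set c : ℝ := D * (1 + ρ₀ ^ 2) ^ |2 * e| with hc
  have hc0 : 0 ≤ c := by positivity
  set f : (Fin l → Fin (2 * k + 1)) → EuclideanSpace ℝ (Fin l) → ℂ := fun α =>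
    partialD (fun i => (α i : ℕ)) (invFT l (sRz l ρ₀ R z)) with hf
  have hnice := niceF_sRz l ρ₀ R z hz hR
  have hcont : ∀ α, Continuous (f α) := by
    intro α
    simp only [hf, partialD]
    rw [mderiv_invFT hnice]
    exact (hnice.mul (monoL_contDiff _).continuous).continuous_invFT
  set B : ℝ := (√(R - ρ₀ ^ 2)) ^ (4 * k + l) * (a * √(R - ρ₀ ^ 2)) ^ (-(2 * z.re + 1)) with hBd
  have hB0 : 0 ≤ B := by positivity
  have hfb : ∀ α ∈ S, ∫⁻ H in {H : EuclideanSpace ℝ (Fin l) | a < ‖H‖}, ‖f α H‖ₑ ^ 2 ≤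
      ENNReal.ofReal (C α * B) := by
    intro α hα
    refine (hC α R hR a ha).trans (ENNReal.ofReal_le_ofReal ?_)
    have hlen : ((List.finRange l).flatMap fun i => List.replicate (α i : ℕ) i).length ≤ 2 * k := by
      rw [List.length_flatMap]
      simp only [List.length_replicate]
      rw [← Fin.sum_univ_def]
      exact (Finset.mem_filter.1 hα).2
    refine mul_le_mul_of_nonneg_left ?_ (hC0 α)
    refine mul_le_mul_of_nonneg_right ?_ (by positivity)
    exact pow_le_pow_right₀ hr1 (by omega)
  have hInteg : ∫ H in {H : EuclideanSpace ℝ (Fin l) | a < ‖H‖}, (∑ α ∈ S, ‖f α H‖) ^ 2 ≤ D * B := by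
    have hDB : 0 ≤ D * B := by positivity
    have hcs : Continuous (fun H => (∑ α ∈ S, ‖f α H‖) ^ 2) :=
      (continuous_finsetSum _ fun α _ => (hcont α).norm).pow 2
    rw [integral_eq_lintegral_of_nonneg_ae (Filter.Eventually.of_forall fun H => sq_nonneg _)
      hcs.aestronglyMeasurable]
    refine ENNReal.toReal_le_of_le_ofReal hDB ?_
    calc _ ≤ ∫⁻ H in {H : EuclideanSpace ℝ (Fin l) | a < ‖H‖},
          ENNReal.ofReal S.card * ∑ α ∈ S, ‖f α H‖ₑ ^ 2 := by
          refine lintegral_mono fun H => ?_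
          have h1 : ∀ α, ‖f α H‖ₑ ^ 2 = ENNReal.ofReal (‖f α H‖ ^ 2) := fun α => by
            rw [← ofReal_norm, ENNReal.ofReal_pow (norm_nonneg _)]
          simp only [h1]
          rw [← ENNReal.ofReal_sum_of_nonneg (fun α _ => by positivity),
            ← ENNReal.ofReal_mul (by positivity)]
          exact ENNReal.ofReal_le_ofReal sq_sum_le_card_mul_sum_sq
      _ = ENNReal.ofReal S.card * ∑ α ∈ S,
          ∫⁻ H in {H : EuclideanSpace ℝ (Fin l) | a < ‖H‖}, ‖f α H‖ₑ ^ 2 := by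
          rw [lintegral_const_mul' _ _ ENNReal.ofReal_ne_top, lintegral_finsetSum]
          intro α _
          exact ((hcont α).enorm.measurable).pow_const 2
      _ ≤ ENNReal.ofReal S.card * ∑ α ∈ S, ENNReal.ofReal (C α * B) := by
          gcongr ENNReal.ofReal _ * ?_
          exact Finset.sum_le_sum hfb
      _ = _ := by
          rw [← ENNReal.ofReal_sum_of_nonneg (fun α _ => mul_nonneg (hC0 α) hB0),
            ← ENNReal.ofReal_mul (by positivity), ← Finset.sum_mul, hD, mul_assoc]
  have hBe : B = (R - ρ₀ ^ 2) ^ (2 * e) * (a ^ (-z.re - 1 / 2)) ^ 2 := by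
    have hM0 : 0 < R - ρ₀ ^ 2 := by linarith
    rw [hBd]
    generalize R - ρ₀ ^ 2 = M at hM0
    rw [Real.mul_rpow ha0.le (by positivity), Real.sqrt_eq_rpow,
      ← Real.rpow_natCast (M ^ (1 / 2 : ℝ)), ← Real.rpow_mul hM0.le, ← Real.rpow_mul hM0.le,
      ← Real.rpow_natCast (a ^ (-z.re - 1 / 2)), ← Real.rpow_mul ha0.le, mul_left_comm, ← Real.rpow_add hM0, mul_comm]
    congr 2
    · rw [he]; push_cast; ring
    · push_cast; ring
  have hMR : (R - ρ₀ ^ 2) ^ (2 * e) ≤ (1 + ρ₀ ^ 2) ^ |2 * e| * R ^ (2 * e) := by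
    have hone : (1:ℝ) ≤ (1 + ρ₀ ^ 2) ^ |2 * e| :=
      Real.one_le_rpow (by nlinarith [sq_nonneg ρ₀]) (abs_nonneg _)
    rcases le_total 0 (2 * e) with h | h
    · have hle : R - ρ₀ ^ 2 ≤ R := by nlinarith [sq_nonneg ρ₀]
      have hM0 : 0 ≤ R - ρ₀ ^ 2 := by linarith
      refine le_trans (Real.rpow_le_rpow hM0 hle h) ?_
      exact le_mul_of_one_le_left (by positivity) hone
    · have h1 : R / (1 + ρ₀ ^ 2) ≤ R - ρ₀ ^ 2 := by
        rw [div_le_iff₀ (by positivity)]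
        nlinarith [mul_nonneg (sq_nonneg ρ₀) (sub_nonneg.2 hR)]
      refine le_trans (Real.rpow_le_rpow_of_nonpos (by positivity) h1 h) (le_of_eq ?_)
      rw [abs_of_nonpos h, Real.div_rpow (by linarith) (by positivity),
        Real.rpow_neg (by positivity), div_eq_inv_mul]
  apply Real.sqrt_le_iff.2
  refine ⟨by positivity, hInteg.trans ?_⟩
  have hRe : (R ^ e) ^ 2 = R ^ (2 * e) := by
    rw [← Real.rpow_natCast, ← Real.rpow_mul (by linarith)]
    congr 1; push_cast; ring
  rw [mul_pow, mul_pow, hRe, hBe]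
  calc D * ((R - ρ₀ ^ 2) ^ (2 * e) * (a ^ (-z.re - 1 / 2)) ^ 2)
      ≤ D * (((1 + ρ₀ ^ 2) ^ |2 * e| * R ^ (2 * e)) * (a ^ (-z.re - 1 / 2)) ^ 2) := by gcongr
    _ = c * (R ^ (2 * e) * (a ^ (-z.re - 1 / 2)) ^ 2) := by rw [hc]; ring
    _ ≤ (c + 1) ^ 2 * (R ^ (2 * e) * (a ^ (-z.re - 1 / 2)) ^ 2) := by
        refine mul_le_mul_of_nonneg_right ?_ (by positivity)
        nlinarith
    _ = _ := by ring
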